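/- The set DS_{a,b} = {α_0, α_1, …, α_{n−b}} is closed under the addition and multiplication of STR{a,b}; in it α_0 is a zero element (α_0 + α_k = α_k and α_0 · α_k = α_k · α_0 = α_0 for all 0 ≤ k ≤ n − b) and α_{n−b} is a right identity (α_k · α_{n−b} = α_k for all 0 ≤ k ≤ n − b). Moreover the map D with D(α_k) = α_{k−1} for k ≥ 1 and D(α_0) = α_0 is a derivation of DS_{a,b}: for all 0 ≤ k, ℓ ≤ n − b, D(α_k + α_ℓ) = D(α_k) + D(α_ℓ) and D(α_k · α_ℓ) = D(α_k) · α_ℓ + α_k · D(α_ℓ). -/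

import Mathlib

/-- Pointwise-max addition on endomorphisms of the chain `Fin N`. -/
def sAdd {N : ℕ} (f g : Fin N → Fin N) : Fin N → Fin N := fun i => max (f i) (g i)

/-- Multiplication in diagram order: `(f·g)(i) = g (f i)`. -/
def sMul {N : ℕ} (f g : Fin N → Fin N) : Fin N → Fin N := fun i => g (f i)

/-- The element `α_k` of the string `STR{a,b}`: `α_k i = a` if `i ≤ N - k - 1`
    (equivalently `i + k < N`) and `α_k i = b` otherwise. -/
def alpha {N : ℕ} (a b : Fin N) (k : ℕ) : Fin N → Fin N :=
  fun i => if (i : ℕ) + k < N then a else b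

/-!
The map `k ↦ α_k` is monotone, so sums are maxima of indices. Products degenerate:
`α_k` takes only the values `a` and `b`, so right multiplication by `α_ℓ` is constantly `α_0` if
`ℓ < n - b` and is the identity if `n - b ≤ ℓ < n - a`. For the Leibniz rule the index `n - b` is
exactly the threshold: `D α_{n-b}` drops into the first range, so `α_k · D α_ℓ = α_0` for every
`ℓ ≤ n - b`, and what remains is `D (α_k · α_ℓ) = D α_k · α_ℓ`.
-/

section

variable {n : ℕ} {a b : Fin n}

theorem alpha_apply_of_lt {i : Fin n} {k : ℕ} (h : (i : ℕ) + k < n) : alpha a b k i = a :=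
  if_pos h

theorem alpha_apply_of_le {i : Fin n} {k : ℕ} (h : n ≤ (i : ℕ) + k) : alpha a b k i = b :=
  if_neg h.not_gt

theorem alpha_zero_apply (i : Fin n) : alpha a b 0 i = a :=
  alpha_apply_of_lt i.isLt

theorem alpha_apply_le (hab : a ≤ b) (k : ℕ) (i : Fin n) : alpha a b k i ≤ b := by
  rcases lt_or_ge ((i : ℕ) + k) n with h | h
  · rwa [alpha_apply_of_lt h]
  · rw [alpha_apply_of_le h]

theorem alpha_monotone (hab : a ≤ b) : Monotone (alpha a b) := by
  intro k ℓ hkℓ i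
  rcases lt_or_ge ((i : ℕ) + ℓ) n with h | h
  · rw [alpha_apply_of_lt h, alpha_apply_of_lt (by omega)]
  · rw [alpha_apply_of_le h]
    exact alpha_apply_le hab k i

theorem sAdd_alpha_alpha (hab : a ≤ b) (k ℓ : ℕ) :
    sAdd (alpha a b k) (alpha a b ℓ) = alpha a b (max k ℓ) :=
  ((alpha_monotone hab).map_sup k ℓ).symm

theorem sAdd_alpha_pred_alpha_pred (hab : a ≤ b) (k ℓ : ℕ) :
    sAdd (alpha a b (k - 1)) (alpha a b (ℓ - 1)) = alpha a b (max k ℓ - 1) := by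
  rw [sAdd_alpha_alpha hab, Nat.sub_max_sub_right]

theorem sMul_alpha_eq_alpha_zero {f : Fin n → Fin n} {ℓ : ℕ} (hf : ∀ i, (f i : ℕ) + ℓ < n) :
    sMul f (alpha a b ℓ) = alpha a b 0 := by
  funext i
  rw [alpha_zero_apply]
  exact alpha_apply_of_lt (hf i)

theorem sMul_alpha_alpha_of_lt (hab : a ≤ b) (k : ℕ) {ℓ : ℕ} (hℓ : (b : ℕ) + ℓ < n) :
    sMul (alpha a b k) (alpha a b ℓ) = alpha a b 0 :=
  sMul_alpha_eq_alpha_zero fun i =>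
    (Nat.add_le_add_right (Fin.le_def.mp (alpha_apply_le hab k i)) ℓ).trans_lt hℓ

theorem sMul_alpha_alpha_of_le_of_lt (k : ℕ) {ℓ : ℕ} (hb : n ≤ (b : ℕ) + ℓ)
    (ha : (a : ℕ) + ℓ < n) : sMul (alpha a b k) (alpha a b ℓ) = alpha a b k := by
  funext i
  change alpha a b ℓ (alpha a b k i) = alpha a b k i
  rcases lt_or_ge ((i : ℕ) + k) n with h | h
  · rw [alpha_apply_of_lt h, alpha_apply_of_lt ha]
  · rw [alpha_apply_of_le h, alpha_apply_of_le hb]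

theorem sMul_alpha_alpha_sub (hab : a < b) (k : ℕ) :
    sMul (alpha a b k) (alpha a b (n - b)) = alpha a b k :=
  sMul_alpha_alpha_of_le_of_lt k (by omega) (by omega)

theorem sMul_alpha_zero_alpha {ℓ : ℕ} (hℓ : (a : ℕ) + ℓ < n) :
    sMul (alpha a b 0) (alpha a b ℓ) = alpha a b 0 :=
  sMul_alpha_eq_alpha_zero fun i => by rwa [alpha_zero_apply]

theorem sMul_alpha_alpha_pred (hab : a ≤ b) (k : ℕ) {ℓ : ℕ} (hℓ : ℓ ≤ n - b) :
    sMul (alpha a b k) (alpha a b (ℓ - 1)) = alpha a b 0 :=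
  sMul_alpha_alpha_of_lt hab k (by omega)

theorem exists_sMul_alpha_alpha_eq_and_leibniz (hab : a < b) (k : ℕ) {ℓ : ℕ} (hℓ : ℓ ≤ n - b) :
    ∃ m ≤ k, sMul (alpha a b k) (alpha a b ℓ) = alpha a b m ∧
      alpha a b (m - 1) =
        sAdd (sMul (alpha a b (k - 1)) (alpha a b ℓ))
          (sMul (alpha a b k) (alpha a b (ℓ - 1))) := by
  rw [sMul_alpha_alpha_pred hab.le k hℓ]
  rcases hℓ.lt_or_eq with h | rfl
  · have hbℓ : (b : ℕ) + ℓ < n := by omega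
    refine ⟨0, k.zero_le, sMul_alpha_alpha_of_lt hab.le k hbℓ, ?_⟩
    rw [sMul_alpha_alpha_of_lt hab.le (k - 1) hbℓ, sAdd_alpha_alpha hab.le, max_self]
  · refine ⟨k, le_rfl, sMul_alpha_alpha_sub hab k, ?_⟩
    rw [sMul_alpha_alpha_sub hab, sAdd_alpha_alpha hab.le, Nat.max_zero]

end

/-- `DS_{a,b} = {α_0,…,α_{n−b}}` is closed under addition and
multiplication; `α_0` is a zero element and `α_{n−b}` a right identity in it;
and the map `D` with `D(α_k) = α_{k−1}` (and `D(α_0) = α_0`, encoded by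
truncated subtraction `k - 1`) is a derivation of `DS_{a,b}`. -/
theorem stmt3 (n : ℕ) (a b : Fin n) (hab : a < b) :
    -- closure of DS under addition and multiplication
    (∀ k ℓ : ℕ, k ≤ n - (b : ℕ) → ℓ ≤ n - (b : ℕ) →
      (∃ m ≤ n - (b : ℕ), sAdd (alpha a b k) (alpha a b ℓ) = alpha a b m) ∧
      (∃ m ≤ n - (b : ℕ), sMul (alpha a b k) (alpha a b ℓ) = alpha a b m)) ∧
    -- α_0 is a zero element of DS
    (∀ k : ℕ, k ≤ n - (b : ℕ) →
      sAdd (alpha a b 0) (alpha a b k) = alpha a b k ∧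
      sMul (alpha a b 0) (alpha a b k) = alpha a b 0 ∧
      sMul (alpha a b k) (alpha a b 0) = alpha a b 0) ∧
    -- α_{n-b} is a right identity of DS
    (∀ k : ℕ, k ≤ n - (b : ℕ) →
      sMul (alpha a b k) (alpha a b (n - (b : ℕ))) = alpha a b k) ∧
    -- D is additive: D(α_k + α_ℓ) = D(α_k) + D(α_ℓ)
    (∀ k ℓ : ℕ, k ≤ n - (b : ℕ) → ℓ ≤ n - (b : ℕ) →
      sAdd (alpha a b k) (alpha a b ℓ) = alpha a b (max k ℓ) ∧
      alpha a b (max k ℓ - 1) = sAdd (alpha a b (k - 1)) (alpha a b (ℓ - 1))) ∧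
    -- D satisfies the Leibniz rule: D(α_k · α_ℓ) = D(α_k)·α_ℓ + α_k·D(α_ℓ)
    (∀ k ℓ : ℕ, k ≤ n - (b : ℕ) → ℓ ≤ n - (b : ℕ) →
      ∃ m ≤ n - (b : ℕ), sMul (alpha a b k) (alpha a b ℓ) = alpha a b m ∧
        alpha a b (m - 1) =
          sAdd (sMul (alpha a b (k - 1)) (alpha a b ℓ))
               (sMul (alpha a b k) (alpha a b (ℓ - 1)))) := by
  have leibniz (k ℓ : ℕ) (hk : k ≤ n - (b : ℕ)) (hℓ : ℓ ≤ n - (b : ℕ)) :=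
    (exists_sMul_alpha_alpha_eq_and_leibniz hab k hℓ).imp fun _ h => h.imp_left (·.trans hk)
  refine ⟨fun k ℓ hk hℓ => ⟨?_, ?_⟩, fun k hk => ⟨?_, ?_, ?_⟩, ?_, fun k ℓ _ _ => ⟨?_, ?_⟩, leibniz⟩
  · exact ⟨max k ℓ, max_le hk hℓ, sAdd_alpha_alpha hab.le k ℓ⟩
  · exact (leibniz k ℓ hk hℓ).imp fun _ h => h.imp_right And.left
  · rw [sAdd_alpha_alpha hab.le, Nat.zero_max]
  · exact sMul_alpha_zero_alpha (by omega)
  · exact sMul_alpha_alpha_of_lt hab.le k b.isLt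
  · exact fun k _ => sMul_alpha_alpha_sub hab k
  · exact sAdd_alpha_alpha hab.le k ℓ
  · exact (sAdd_alpha_pred_alpha_pred hab.le k ℓ).symm
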